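/- Let n > -1 and ν > -(n+1)/2, and let D > 0 be a constant such that for all x > 0, ∫₀ˣ t^{-ν} L_{ν+n}(t) dt ≤ D · x^{-ν} L_{ν+n}(x). Suppose 0 < γ < 1/D. Then for all x > 0, ∫₀ˣ e^{-γt} t^{-ν} L_{ν+n}(t) dt < (e^{-γx} / (1 − Dγ)) ( (2(ν+n+1)/(n+1)) x^{-ν} L_{ν+n+1}(x) − ((2ν+n+1)/(n+1)) x^{-ν} L_{ν+n+3}(x) + b_{ν,n} x^{n+4} − c_{ν,n} x^{n+2} ). -/

import Mathlib

/-!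
Write `L` for the modified Struve function. Integrating `exp (-γ t) g t` by parts, with
`g t = t ^ (-ν) * L_{ν+n} t`, produces `γ ∫ exp (-γ t) (∫₀ᵗ g)`, and the hypothesis `∫₀ᵗ g ≤ D g t`
absorbs this term into the left-hand side at the price of the factor `1 - D γ`. It remains to bound
`∫₀ˣ g`. With `a_{μ,k} = modStruveCoeff μ k`, its expansion in powers of `x` has coefficients
`a_{ν+n,k} / (n + 2k + 2)`, and the recurrences `a_{μ,k} = (2k + 2μ + 3) a_{μ+1,k}` and
`a_{μ+1,k} = (2k + 3) a_{μ,k+1}` reduce all coefficients at `x ^ (n + 2k + 4)` to multiples of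
`a_{ν+n+2,k+1}`. The combination of `L_{ν+n+1}` and `L_{ν+n+3}` exceeds `∫₀ˣ g` by an explicit
positive multiple in each of these degrees, and by exactly the `cConst` term in the lowest degree
`x ^ (n + 2)`; the positive `bConst` term only adds slack.
-/

/-- The modified Struve function of the first kind. -/
noncomputable def modStruveL (ν x : ℝ) : ℝ :=
  ∑' k : ℕ, (x / 2) ^ (ν + 2 * (k : ℝ) + 1) /
    (Real.Gamma ((k : ℝ) + 3 / 2) * Real.Gamma ((k : ℝ) + ν + 3 / 2))

/-- The constant `b_{ν,n}`. -/
noncomputable def bConst (ν n : ℝ) : ℝ :=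
  ((2 * ν + n + 1) * (2 * ν + n + 3)) /
    (Real.sqrt Real.pi * (2 : ℝ) ^ (ν + n + 4) * (n + 1) * (n + 4) * (ν + n + 3) *
      Real.Gamma (ν + n + 9 / 2))

/-- The constant `c_{ν,n}`. -/
noncomputable def cConst (ν n : ℝ) : ℝ :=
  (2 * ν + n + 1) /
    (Real.sqrt Real.pi * (2 : ℝ) ^ (ν + n + 1) * (n + 1) * (n + 2) *
      Real.Gamma (ν + n + 5 / 2))

open Filter MeasureTheory Set
open scoped Interval

theorem norm_mul_rpow_le_norm_mul_rpow {c p t x : ℝ} (hp : 0 ≤ p) (ht : 0 ≤ t) (htx : t ≤ x) :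
    ‖c * t ^ p‖ ≤ ‖c * x ^ p‖ := by
  have hpow : t ^ p ≤ x ^ p := Real.rpow_le_rpow ht htx hp
  rw [norm_mul, norm_mul, Real.norm_of_nonneg (Real.rpow_nonneg ht p),
    Real.norm_of_nonneg (Real.rpow_nonneg (ht.trans htx) p)]
  gcongr

section RpowSeries

variable {ι : Type*} {c p : ι → ℝ} {x : ℝ}

theorem continuousOn_tsum_mul_rpow (hp : ∀ i, 0 ≤ p i)
    (hs : Summable fun i ↦ c i * x ^ p i) :
    ContinuousOn (fun t ↦ ∑' i, c i * t ^ p i) (Icc 0 x) :=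
  continuousOn_tsum
    (fun i ↦ ((Real.continuous_rpow_const (hp i)).const_mul (c i)).continuousOn) hs.norm
    fun i _ ht ↦ norm_mul_rpow_le_norm_mul_rpow (hp i) ht.1 ht.2

theorem hasSum_integral_tsum_mul_rpow [Countable ι] (hp : ∀ i, 0 ≤ p i) (hx : 0 ≤ x)
    (hs : Summable fun i ↦ c i * x ^ p i) :
    HasSum (fun i ↦ c i * (x ^ (p i + 1) / (p i + 1)))
      (∫ t in (0 : ℝ)..x, ∑' i, c i * t ^ p i) := by
  have hterm (i : ι) :
      ∫ t in (0 : ℝ)..x, c i * t ^ p i = c i * (x ^ (p i + 1) / (p i + 1)) := by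
    have hpi := hp i
    rw [intervalIntegral.integral_const_mul, integral_rpow (Or.inl (by linarith)),
      Real.zero_rpow (by linarith), sub_zero]
  have hle (i : ι) (t : ℝ) (ht : t ∈ Ι 0 x) : ‖c i * t ^ p i‖ ≤ ‖c i * x ^ p i‖ := by
    rw [uIoc_of_le hx] at ht
    exact norm_mul_rpow_le_norm_mul_rpow (hp i) ht.1.le ht.2
  simp_rw [← hterm]
  refine intervalIntegral.hasSum_integral_of_dominated_convergence (fun i _ ↦ ‖c i * x ^ p i‖)
    (fun i ↦ ((Real.continuous_rpow_const (hp i)).const_mul (c i)).aestronglyMeasurable)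
    (fun i ↦ ae_of_all _ (hle i)) (ae_of_all _ fun _ _ ↦ hs.norm) intervalIntegrable_const
    (ae_of_all _ fun t ht ↦ ?_)
  exact (hs.norm.of_norm_bounded fun i ↦ hle i t ht).hasSum

end RpowSeries

theorem integral_exp_neg_mul_le {g : ℝ → ℝ} {a b D γ : ℝ} (hab : a ≤ b) (hγ : 0 ≤ γ)
    (hg : ContinuousOn g (Icc a b)) (hle : ∀ y ∈ Ioo a b, ∫ t in a..y, g t ≤ D * g y) :
    (1 - D * γ) * ∫ t in a..b, Real.exp (-γ * t) * g t ≤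
      Real.exp (-γ * b) * ∫ t in a..b, g t := by
  have hgi : IntervalIntegrable g volume a b := hg.intervalIntegrable_of_Icc hab
  have hG : ContinuousOn (fun y ↦ ∫ t in a..y, g t) [[a, b]] :=
    intervalIntegral.continuousOn_primitive_interval' hgi left_mem_uIcc
  have hG' (y : ℝ) (hy : y ∈ Ioo a b) : HasDerivAt (fun y ↦ ∫ t in a..y, g t) (g y) y :=
    intervalIntegral.integral_hasDerivAt_right
      (hgi.mono_set (uIcc_subset_uIcc_left (by rw [uIcc_of_le hab]; exact Ioo_subset_Icc_self hy)))
      ((hg.mono Ioo_subset_Icc_self).stronglyMeasurableAtFilter isOpen_Ioo y hy)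
      (hg.continuousAt (Icc_mem_nhds hy.1 hy.2))
  have hexp (y : ℝ) : HasDerivAt (fun y ↦ Real.exp (-γ * y)) (Real.exp (-γ * y) * -γ) y :=
    (hasDerivAt_const_mul (-γ)).exp
  have hexp_cont : Continuous fun y ↦ Real.exp (-γ * y) := by fun_prop
  have hexp'_cont : Continuous fun y ↦ Real.exp (-γ * y) * -γ := by fun_prop
  have hparts := intervalIntegral.integral_mul_deriv_eq_deriv_mul_of_hasDerivAt
    hexp_cont.continuousOn hG (fun y _ ↦ hexp y)
    (fun y hy ↦ hG' y (by rwa [min_eq_left hab, max_eq_right hab] at hy))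
    (hexp'_cont.intervalIntegrable a b) hgi
  have habsorb : ∫ y in a..b, Real.exp (-γ * y) * -γ * (D * g y) ≤
      ∫ y in a..b, Real.exp (-γ * y) * -γ * ∫ t in a..y, g t := by
    refine intervalIntegral.integral_mono_on_of_le_Ioo hab
      ((hgi.const_mul D).continuousOn_mul hexp'_cont.continuousOn)
      (hG.intervalIntegrable.continuousOn_mul hexp'_cont.continuousOn)
      fun y hy ↦ mul_le_mul_of_nonpos_left (hle y hy) ?_
    exact mul_nonpos_of_nonneg_of_nonpos (Real.exp_pos _).le (neg_nonpos.2 hγ)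
  have hfactor : ∫ y in a..b, Real.exp (-γ * y) * -γ * (D * g y) =
      -(D * γ) * ∫ y in a..b, Real.exp (-γ * y) * g y := by
    rw [← intervalIntegral.integral_const_mul]
    exact intervalIntegral.integral_congr fun y _ ↦ by ring
  rw [intervalIntegral.integral_same, mul_zero, sub_zero] at hparts
  linarith

/-- The coefficient of `x ^ (μ + 2 * k + 1)` in the expansion of `modStruveL μ x` for `0 ≤ x`. The
integral and the products `x ^ (-ν) * modStruveL (ν + m) x` are compared through it. -/
noncomputable def modStruveCoeff (μ : ℝ) (k : ℕ) : ℝ :=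
  1 / ((2 : ℝ) ^ (μ + 2 * (k : ℝ) + 1) *
    (Real.Gamma ((k : ℝ) + 3 / 2) * Real.Gamma ((k : ℝ) + μ + 3 / 2)))

theorem modStruveCoeff_pos {μ : ℝ} (hμ : -(3 / 2) < μ) (k : ℕ) : 0 < modStruveCoeff μ k := by
  have hΓ : 0 < Real.Gamma ((k : ℝ) + 3 / 2) := Real.Gamma_pos_of_pos (by positivity)
  have hΓμ : 0 < Real.Gamma ((k : ℝ) + μ + 3 / 2) :=
    Real.Gamma_pos_of_pos (by linarith [k.cast_nonneg (α := ℝ)])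
  exact one_div_pos.2 (mul_pos (by positivity) (mul_pos hΓ hΓμ))

theorem modStruveCoeff_eq_mul_add_one {μ : ℝ} {k : ℕ} (h : (k : ℝ) + μ + 3 / 2 ≠ 0) :
    modStruveCoeff μ k = (2 * k + 2 * μ + 3) * modStruveCoeff (μ + 1) k := by
  have hΓ : Real.Gamma (k + (μ + 1) + 3 / 2) = (k + μ + 3 / 2) * Real.Gamma (k + μ + 3 / 2) := by
    rw [← Real.Gamma_add_one h]
    ring_nf
  have hpow : (2 : ℝ) ^ (μ + 1 + 2 * (k : ℝ) + 1) = 2 ^ (μ + 2 * (k : ℝ) + 1) * 2 := by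
    rw [← Real.rpow_add_one two_ne_zero]
    ring_nf
  rw [modStruveCoeff, modStruveCoeff, hΓ, hpow,
    show 2 * (k : ℝ) + 2 * μ + 3 = 2 * (k + μ + 3 / 2) by ring]
  generalize (k : ℝ) + μ + 3 / 2 = z at h ⊢
  field_simp

theorem modStruveCoeff_add_one_eq_mul (μ : ℝ) (k : ℕ) :
    modStruveCoeff (μ + 1) k = (2 * k + 3) * modStruveCoeff μ (k + 1) := by
  have hk : (k : ℝ) + 3 / 2 ≠ 0 := by positivity
  have hΓ : Real.Gamma ((k + 1 : ℕ) + 3 / 2) = (k + 3 / 2) * Real.Gamma (k + 3 / 2) := by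
    rw [← Real.Gamma_add_one hk]
    push_cast
    ring_nf
  have hΓμ : ((k + 1 : ℕ) : ℝ) + μ + 3 / 2 = k + (μ + 1) + 3 / 2 := by
    push_cast
    ring
  have hpow : (2 : ℝ) ^ (μ + 2 * ((k + 1 : ℕ) : ℝ) + 1) = 2 ^ (μ + 1 + 2 * (k : ℝ) + 1) * 2 := by
    rw [← Real.rpow_add_one two_ne_zero]
    push_cast
    ring_nf
  rw [modStruveCoeff, modStruveCoeff, hΓ, hΓμ, hpow,
    show 2 * (k : ℝ) + 3 = 2 * (k + 3 / 2) by ring]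
  field_simp

theorem summable_modStruveCoeff_mul_pow (μ y : ℝ) :
    Summable fun k ↦ modStruveCoeff μ k * y ^ k := by
  have hcast : Tendsto (fun k : ℕ ↦ (k : ℝ)) atTop atTop := tendsto_natCast_atTop_atTop
  refine summable_of_ratio_norm_eventually_le one_half_lt_one ?_
  filter_upwards [hcast.eventually_ge_atTop (|y| + |μ|)] with k hk
  have hμ : -μ ≤ |μ| := neg_le_abs μ
  have hy : 0 ≤ |y| := abs_nonneg y
  have hq : 2 * |y| ≤ |(2 * k + 2 * μ + 3) * (2 * k + 3)| :=
    calc 2 * |y| ≤ 2 * k + 2 * μ + 3 := by linarith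
      _ ≤ (2 * k + 2 * μ + 3) * (2 * k + 3) :=
        le_mul_of_one_le_right (by linarith) (by linarith [k.cast_nonneg (α := ℝ)])
      _ ≤ |(2 * k + 2 * μ + 3) * (2 * k + 3)| := le_abs_self _
  rw [modStruveCoeff_eq_mul_add_one (by linarith : (0 : ℝ) < k + μ + 3 / 2).ne',
    modStruveCoeff_add_one_eq_mul, ← mul_assoc, pow_succ]
  simp only [norm_mul, Real.norm_eq_abs] at hq ⊢
  rw [abs_mul] at hq
  have hc : 0 ≤ |modStruveCoeff μ (k + 1)| * |y ^ k| := by positivity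
  linarith [mul_le_mul_of_nonneg_right hq hc]

theorem hasSum_rpow_neg_mul_modStruveL (ν : ℝ) {m x : ℝ} (hm : -1 < m) (hx : 0 ≤ x) :
    HasSum (fun k : ℕ ↦ modStruveCoeff (ν + m) k * x ^ (m + 2 * k + 1))
      (x ^ (-ν) * modStruveL (ν + m) x) := by
  have hexponent (k : ℕ) : 0 < m + 2 * k + 1 := by linarith [k.cast_nonneg (α := ℝ)]
  have hsummable : Summable fun k : ℕ ↦ modStruveCoeff (ν + m) k * x ^ (m + 2 * k + 1) := by
    refine ((summable_modStruveCoeff_mul_pow (ν + m) (x ^ 2)).mul_left (x ^ (m + 1))).congr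
      fun k ↦ ?_
    have hsplit : m + 2 * k + 1 = m + 1 + ((2 * k : ℕ) : ℝ) := by
      push_cast
      ring
    rw [hsplit, Real.rpow_add_natCast' hx (hsplit ▸ (hexponent k).ne'), pow_mul]
    ring
  convert hsummable.hasSum using 1
  rw [modStruveL, ← tsum_mul_left]
  refine tsum_congr fun k ↦ ?_
  rw [show m + 2 * (k : ℝ) + 1 = -ν + (ν + m + 2 * k + 1) by ring,
    Real.rpow_add' hx (by linarith [hexponent k]), Real.div_rpow hx zero_le_two, modStruveCoeff]
  ring

theorem rpow_neg_mul_modStruveL_eqOn_tsum (ν : ℝ) {n : ℝ} (hn : -1 < n) :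
    EqOn (fun t ↦ t ^ (-ν) * modStruveL (ν + n) t)
      (fun t ↦ ∑' k : ℕ, modStruveCoeff (ν + n) k * t ^ (n + 2 * k + 1)) (Ici 0) :=
  fun _ ht ↦ (hasSum_rpow_neg_mul_modStruveL ν hn ht).tsum_eq.symm

theorem continuousOn_rpow_neg_mul_modStruveL (ν : ℝ) {n x : ℝ} (hn : -1 < n) (hx : 0 ≤ x) :
    ContinuousOn (fun t ↦ t ^ (-ν) * modStruveL (ν + n) t) (Icc 0 x) :=
  (continuousOn_tsum_mul_rpow (fun k : ℕ ↦ by linarith [k.cast_nonneg (α := ℝ)])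
    (hasSum_rpow_neg_mul_modStruveL ν hn hx).summable).congr
    ((rpow_neg_mul_modStruveL_eqOn_tsum ν hn).mono Icc_subset_Ici_self)

theorem hasSum_integral_rpow_neg_mul_modStruveL (ν : ℝ) {n x : ℝ} (hn : -1 < n) (hx : 0 ≤ x) :
    HasSum (fun k : ℕ ↦ modStruveCoeff (ν + n) k * (x ^ (n + 2 * k + 2) / (n + 2 * k + 2)))
      (∫ t in (0 : ℝ)..x, t ^ (-ν) * modStruveL (ν + n) t) := by
  have h := hasSum_integral_tsum_mul_rpow
    (fun k : ℕ ↦ by linarith [k.cast_nonneg (α := ℝ)]) hx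
    (hasSum_rpow_neg_mul_modStruveL ν hn hx).summable
  rw [intervalIntegral.integral_congr ((rpow_neg_mul_modStruveL_eqOn_tsum ν hn).mono
    ((uIcc_of_le hx).trans_subset Icc_subset_Ici_self))]
  refine h.congr_fun fun k ↦ ?_
  rw [show n + 2 * (k : ℝ) + 1 + 1 = n + 2 * k + 2 by ring]

theorem bConst_pos {ν n : ℝ} (hn : -1 < n) (hν : 0 < 2 * ν + n + 1) : 0 < bConst ν n := by
  have hΓ : 0 < Real.Gamma (ν + n + 9 / 2) := Real.Gamma_pos_of_pos (by linarith)
  have h₁ : 0 < n + 1 := by linarith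
  have h₃ : 0 < 2 * ν + n + 3 := by linarith
  have h₄ : 0 < n + 4 := by linarith
  have h₅ : 0 < ν + n + 3 := by linarith
  unfold bConst
  positivity

theorem cConst_eq_mul_modStruveCoeff (ν n : ℝ) :
    cConst ν n = (2 * ν + n + 1) / ((n + 1) * (n + 2)) * modStruveCoeff (ν + n + 1) 0 := by
  have hΓ : Real.Gamma (((0 : ℕ) : ℝ) + 3 / 2) = √Real.pi / 2 := by
    rw [Nat.cast_zero, zero_add, show (3 / 2 : ℝ) = 1 / 2 + 1 by norm_num,
      Real.Gamma_add_one (by norm_num), Real.Gamma_one_half_eq]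
    ring
  have hpow : (2 : ℝ) ^ (ν + n + 1 + 2 * ((0 : ℕ) : ℝ) + 1) = 2 ^ (ν + n + 1) * 2 := by
    rw [← Real.rpow_add_one two_ne_zero]
    norm_num
  rw [cConst, modStruveCoeff, hΓ, hpow,
    show ((0 : ℕ) : ℝ) + (ν + n + 1) + 3 / 2 = ν + n + 5 / 2 by push_cast; ring,
    div_mul_div_comm]
  congr 1 <;> ring

theorem modStruveCoeff_zero_div {ν n : ℝ} (hn : -1 < n) (hν : -(3 / 2) < ν + n) :
    modStruveCoeff (ν + n) 0 / (n + 2) =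
      2 * (ν + n + 1) / (n + 1) * modStruveCoeff (ν + n + 1) 0 - cConst ν n := by
  have h₁ : n + 1 ≠ 0 := by linarith
  have h₂ : n + 2 ≠ 0 := by linarith
  rw [cConst_eq_mul_modStruveCoeff, modStruveCoeff_eq_mul_add_one (by push_cast; linarith)]
  push_cast
  field_simp
  ring

theorem modStruveCoeff_succ_div {ν n : ℝ} (hn : -1 < n) (hν : -(3 / 2) < ν + n) (k : ℕ) :
    modStruveCoeff (ν + n) (k + 1) / (n + 2 * k + 4) =
      2 * (ν + n + 1) / (n + 1) * modStruveCoeff (ν + n + 1) (k + 1) -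
      (2 * ν + n + 1) / (n + 1) * modStruveCoeff (ν + n + 3) k -
      (2 * ν + n + 1) * (2 * ν + n + 3) * (2 * k + 3) / ((n + 1) * (n + 2 * k + 4)) *
        modStruveCoeff (ν + n + 2) (k + 1) := by
  have h₁ : n + 1 ≠ 0 := by linarith
  have h₄ : n + 2 * k + 4 ≠ 0 := by linarith [k.cast_nonneg (α := ℝ)]
  rw [modStruveCoeff_eq_mul_add_one (μ := ν + n) (by linarith [(k + 1).cast_nonneg (α := ℝ)]),
    modStruveCoeff_eq_mul_add_one (μ := ν + n + 1)
      (by linarith [(k + 1).cast_nonneg (α := ℝ)]),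
    show ν + n + 1 + 1 = ν + n + 2 by ring, show ν + n + 3 = ν + n + 2 + 1 by ring,
    modStruveCoeff_add_one_eq_mul (ν + n + 2) k]
  push_cast
  field_simp
  ring

theorem modStruveCoeff_succ_div_lt {ν n : ℝ} (hn : -1 < n) (hν : 0 < 2 * ν + n + 1) (k : ℕ) :
    modStruveCoeff (ν + n) (k + 1) / (n + 2 * k + 4) <
      2 * (ν + n + 1) / (n + 1) * modStruveCoeff (ν + n + 1) (k + 1) -
      (2 * ν + n + 1) / (n + 1) * modStruveCoeff (ν + n + 3) k := by
  have hcoeff : 0 < modStruveCoeff (ν + n + 2) (k + 1) := modStruveCoeff_pos (by linarith) _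
  have h₁ : 0 < n + 1 := by linarith
  have h₃ : 0 < 2 * ν + n + 3 := by linarith
  have h₄ : 0 < n + 2 * k + 4 := by linarith [k.cast_nonneg (α := ℝ)]
  rw [modStruveCoeff_succ_div hn (by linarith) k]
  exact sub_lt_self _ (by positivity)

theorem integral_rpow_neg_mul_modStruveL_lt {ν n x : ℝ} (hn : -1 < n)
    (hν : 0 < 2 * ν + n + 1) (hx : 0 < x) :
    ∫ t in (0 : ℝ)..x, t ^ (-ν) * modStruveL (ν + n) t <
      2 * (ν + n + 1) / (n + 1) * (x ^ (-ν) * modStruveL (ν + n + 1) x) -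
      (2 * ν + n + 1) / (n + 1) * (x ^ (-ν) * modStruveL (ν + n + 3) x) -
      cConst ν n * x ^ (n + 2) := by
  have hint := (hasSum_nat_add_iff' 1).2 (hasSum_integral_rpow_neg_mul_modStruveL ν hn hx.le)
  have hL₁ := (hasSum_nat_add_iff' 1).2
    (hasSum_rpow_neg_mul_modStruveL ν (m := n + 1) (by linarith) hx.le)
  have hL₃ := hasSum_rpow_neg_mul_modStruveL ν (m := n + 3) (by linarith) hx.le
  rw [← add_assoc] at hL₁ hL₃
  have hbound := (hL₁.mul_left (2 * (ν + n + 1) / (n + 1))).sub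
    (hL₃.mul_left ((2 * ν + n + 1) / (n + 1)))
  have hterm (k : ℕ) :
      modStruveCoeff (ν + n) (k + 1) *
          (x ^ (n + 2 * (k + 1 : ℕ) + 2) / (n + 2 * (k + 1 : ℕ) + 2)) <
        2 * (ν + n + 1) / (n + 1) *
          (modStruveCoeff (ν + n + 1) (k + 1) * x ^ (n + 1 + 2 * (k + 1 : ℕ) + 1)) -
        (2 * ν + n + 1) / (n + 1) *
          (modStruveCoeff (ν + n + 3) k * x ^ (n + 3 + 2 * (k : ℝ) + 1)) := by
    have h := mul_lt_mul_of_pos_right (modStruveCoeff_succ_div_lt hn hν k)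
      (Real.rpow_pos_of_pos hx (n + 2 * k + 4))
    rw [show n + 2 * ((k + 1 : ℕ) : ℝ) + 2 = n + 2 * k + 4 by push_cast; ring,
      show n + 1 + 2 * ((k + 1 : ℕ) : ℝ) + 1 = n + 2 * k + 4 by push_cast; ring,
      show n + 3 + 2 * (k : ℝ) + 1 = n + 2 * k + 4 by ring]
    linear_combination h
  have hlt := hasSum_lt (fun k ↦ (hterm k).le) (hterm 0) hint hbound
  have hzero := modStruveCoeff_zero_div (ν := ν) hn (by linarith)
  simp only [Finset.sum_range_one, Nat.cast_zero, mul_zero, add_zero] at hlt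
  rw [show n + 1 + 1 = n + 2 by ring] at hlt
  linear_combination hlt + x ^ (n + 2) * hzero

theorem struve_exp_integral_upper_bound_two (ν n D γ : ℝ) (hn : n > -1)
    (hν : ν > -((n + 1) / 2)) (hD : D > 0)
    (hbound : ∀ x > (0 : ℝ), ∫ t in (0 : ℝ)..x, t ^ (-ν) * modStruveL (ν + n) t ≤
      D * (x ^ (-ν) * modStruveL (ν + n) x))
    (hγ1 : 0 < γ) (hγ2 : γ < 1 / D) (x : ℝ) (hx : x > 0) :
    ∫ t in (0 : ℝ)..x, Real.exp (-γ * t) * (t ^ (-ν) * modStruveL (ν + n) t) <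
      (Real.exp (-γ * x) / (1 - D * γ)) *
        ((2 * (ν + n + 1) / (n + 1)) * (x ^ (-ν) * modStruveL (ν + n + 1) x) -
        ((2 * ν + n + 1) / (n + 1)) * (x ^ (-ν) * modStruveL (ν + n + 3) x) +
        bConst ν n * x ^ (n + 4) - cConst ν n * x ^ (n + 2)) := by
  have hν' : 0 < 2 * ν + n + 1 := by linarith
  have hDγ : 0 < 1 - D * γ := by linarith [(lt_div_iff₀' hD).1 hγ2]
  have hexp := integral_exp_neg_mul_le hx.le hγ1.le
    (continuousOn_rpow_neg_mul_modStruveL ν hn hx.le) fun y hy ↦ hbound y hy.1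
  have hint := integral_rpow_neg_mul_modStruveL_lt hn hν' hx
  have hb : 0 < bConst ν n * x ^ (n + 4) := mul_pos (bConst_pos hn hν') (Real.rpow_pos_of_pos hx _)
  rw [div_mul_eq_mul_div, lt_div_iff₀' hDγ]
  refine hexp.trans_lt (mul_lt_mul_of_pos_left ?_ (Real.exp_pos _))
  linarith
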